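/- Let G be a P4-sparse graph and let A be a set of four vertices inducing a P4 in G. Then there do not exist distinct vertices u, v in T(A) ∪ P(A) and a vertex x in I(A) such that the only edge of G among {u, v, x} is vx. -/

import Mathlib

open SimpleGraph

variable {V : Type*}

/-- `a, b, c, d` form an induced path on four vertices (a `P4`) in `G`. -/
def IsP4 (G : SimpleGraph V) (a b c d : V) : Prop :=
  a ≠ b ∧ a ≠ c ∧ a ≠ d ∧ b ≠ c ∧ b ≠ d ∧ c ≠ d ∧
    G.Adj a b ∧ G.Adj b c ∧ G.Adj c d ∧ ¬G.Adj a c ∧ ¬G.Adj a d ∧ ¬G.Adj b d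

/-- A graph is a cograph if it contains no induced `P4`. -/
def IsCograph (G : SimpleGraph V) : Prop :=
  ∀ a b c d : V, ¬IsP4 G a b c d

/-- The vertex set `A` induces a `P4` in `G`. -/
def InducesP4 (G : SimpleGraph V) (A : Set V) : Prop :=
  ∃ a b c d : V, IsP4 G a b c d ∧ A = {a, b, c, d}

/-- `G` is `P4`-sparse: every set of five vertices induces at most one `P4`. -/
def P4Sparse (G : SimpleGraph V) : Prop :=
  ∀ s : Set V, s.ncard = 5 →
    ∀ A B : Set V, A ⊆ s → B ⊆ s → InducesP4 G A → InducesP4 G B → A = B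

/-- `F` is a deletion set of `G`: a set of edges of `G` whose removal yields a cograph. -/
def IsDeletionSet (G : SimpleGraph V) (F : Set (Sym2 V)) : Prop :=
  F ⊆ G.edgeSet ∧ IsCograph (G.deleteEdges F)

/-- The minimum size of a deletion set of `G`. -/
noncomputable def cographAlpha (G : SimpleGraph V) : ℕ :=
  sInf {n | ∃ F : Set (Sym2 V), IsDeletionSet G F ∧ F.ncard = n}

/-- `T(A)`: the vertices outside `A` adjacent to all vertices of `A`. -/
def tSet (G : SimpleGraph V) (A : Set V) : Set V :=
  {v | v ∉ A ∧ ∀ a ∈ A, G.Adj v a}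

/-- `I(A)`: the vertices outside `A` adjacent to no vertex of `A`. -/
def iSet (G : SimpleGraph V) (A : Set V) : Set V :=
  {v | v ∉ A ∧ ∀ a ∈ A, ¬G.Adj v a}

/-- `P(A)`: the vertices `v` outside `A` with `1 ≤ |N(v) ∩ A| ≤ 3`. -/
def pSet (G : SimpleGraph V) (A : Set V) : Set V :=
  {v | v ∉ A ∧ 1 ≤ (G.neighborSet v ∩ A).ncard ∧ (G.neighborSet v ∩ A).ncard ≤ 3}

/-!
In a `P4`-sparse graph, a vertex outside an induced path `a b c d` that misses one of the midpoints
`b`, `c` misses the whole path, since any other adjacency pattern gives a second `P4` on these five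
vertices. So `u, v ∈ T(A) ∪ P(A)` are both adjacent to `b` and to `c`. If `vx` were the only edge
among `u, v, x` with `x ∈ I(A)`, then `x v b u` and `x v c u` would be two different `P4`s on five
vertices.
-/

section

variable {G : SimpleGraph V} {A B : Set V} {a b c c' d w : V}

lemma IsP4.of_adj (hab : G.Adj a b) (hbc : G.Adj b c) (hcd : G.Adj c d) (hac : ¬G.Adj a c)
    (had : ¬G.Adj a d) (hbd : ¬G.Adj b d) : IsP4 G a b c d := by
  have ne_ac : a ≠ c := by rintro rfl; exact had hcd
  have ne_ad : a ≠ d := by rintro rfl; exact hac hcd.symm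
  have ne_bd : b ≠ d := by rintro rfl; exact had hab
  exact ⟨hab.ne, ne_ac, ne_ad, hbc.ne, ne_bd, hcd.ne, hab, hbc, hcd, hac, had, hbd⟩

lemma IsP4.reverse (h : IsP4 G a b c d) : IsP4 G d c b a := by
  obtain ⟨-, -, -, -, -, -, hab, hbc, hcd, hac, had, hbd⟩ := h
  exact .of_adj hcd.symm hbc.symm hab.symm (mt .symm hbd) (mt .symm had) (mt .symm hac)

lemma IsP4.inducesP4 (h : IsP4 G a b c d) : InducesP4 G {a, b, c, d} :=
  ⟨a, b, c, d, h, rfl⟩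

lemma InducesP4.ncard_eq_four (hA : InducesP4 G A) : A.ncard = 4 := by
  obtain ⟨a, b, c, d, ⟨hab, hac, had, hbc, hbd, hcd, -⟩, rfl⟩ := hA
  exact Set.ncard_eq_four.mpr ⟨a, b, c, d, hab, hac, had, hbc, hbd, hcd, rfl⟩

lemma InducesP4.finite (hA : InducesP4 G A) : A.Finite := by
  obtain ⟨a, b, c, d, -, rfl⟩ := hA
  exact Set.toFinite _

lemma P4Sparse.eq_of_subset_insert (hG : P4Sparse G) (hA : InducesP4 G A) (hB : InducesP4 G B)
    (hBA : B ⊆ insert w A) : B = A := by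
  by_cases hw : w ∈ A
  · rw [Set.insert_eq_of_mem hw] at hBA
    exact Set.eq_of_subset_of_ncard_le hBA (by rw [hA.ncard_eq_four, hB.ncard_eq_four]) hA.finite
  · have hcard : (insert w A).ncard = 5 := by
      rw [Set.ncard_insert_of_notMem hw hA.finite, hA.ncard_eq_four]
    exact hG _ hcard B A hBA (Set.subset_insert w A) hB hA

lemma P4Sparse.eq_of_isP4_of_isP4 (hG : P4Sparse G) (h : IsP4 G a b c d)
    (h' : IsP4 G a b c' d) : c = c' := by
  have hsets : ({a, b, c, d} : Set V) = {a, b, c', d} :=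
    hG.eq_of_subset_insert (w := c) h'.inducesP4 h.inducesP4 (by grind)
  have hc : c ∈ ({a, b, c', d} : Set V) := hsets ▸ by simp
  obtain ⟨-, hac, -, hbc, -, hcd, -⟩ := h
  simpa [hac.symm, hbc.symm, hcd] using hc

lemma P4Sparse.mem_iSet_of_not_adj_midpoint (hG : P4Sparse G) (h : IsP4 G a b c d)
    (hw : w ∉ ({a, b, c, d} : Set V)) (hwb : ¬G.Adj w b) : w ∈ iSet G {a, b, c, d} := by
  have false_of_second_P4 {p q r s : V} (hP4 : IsP4 G p q r s)
      (hsub : ({p, q, r, s} : Set V) ⊆ insert w {a, b, c, d})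
      (hmem : w ∈ ({p, q, r, s} : Set V)) : False :=
    hw (hG.eq_of_subset_insert h.inducesP4 hP4.inducesP4 hsub ▸ hmem)
  obtain ⟨-, -, -, -, -, -, hab, hbc, hcd, hac, had, hbd⟩ := h
  have hwc : ¬G.Adj w c := by
    intro hwc
    by_cases hwa : G.Adj w a
    · by_cases hwd : G.Adj w d
      · have hdwab : IsP4 G d w a b :=
          .of_adj hwd.symm hwa hab (mt .symm had) (mt .symm hbd) hwb
        exact false_of_second_P4 hdwab (by grind) (by simp)
      · have hawcd : IsP4 G a w c d := .of_adj hwa.symm hwc hcd hac had hwd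
        exact false_of_second_P4 hawcd (by grind) (by simp)
    · have hwcba : IsP4 G w c b a := .of_adj hwc hbc.symm hab.symm hwb hwa (mt .symm hac)
      exact false_of_second_P4 hwcba (by grind) (by simp)
  have hwa : ¬G.Adj w a := by
    intro hwa
    have hwabc : IsP4 G w a b c := .of_adj hwa hab hbc hwb hwc hac
    exact false_of_second_P4 hwabc (by grind) (by simp)
  have hwd : ¬G.Adj w d := by
    intro hwd
    have hwdcb : IsP4 G w d c b := .of_adj hwd hcd.symm hbc.symm hwc hwb (mt .symm hbd)
    exact false_of_second_P4 hwdcb (by grind) (by simp)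
  exact ⟨hw, by simp [hwa, hwb, hwc, hwd]⟩

lemma exists_adj_of_mem_tSet_union_pSet (hA : A.Nonempty) (hw : w ∈ tSet G A ∪ pSet G A) :
    ∃ y ∈ A, G.Adj w y := by
  rcases hw with ⟨-, hadj⟩ | ⟨-, hpos, -⟩
  · obtain ⟨y, hy⟩ := hA
    exact ⟨y, hy, hadj y hy⟩
  · obtain ⟨y, hwy, hy⟩ := Set.nonempty_of_ncard_ne_zero (Nat.one_le_iff_ne_zero.mp hpos)
    exact ⟨y, hy, hwy⟩

lemma P4Sparse.adj_midpoint_of_mem_tSet_union_pSet (hG : P4Sparse G) (h : IsP4 G a b c d)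
    (hw : w ∈ tSet G {a, b, c, d} ∪ pSet G {a, b, c, d}) : G.Adj w b := by
  have hwA : w ∉ ({a, b, c, d} : Set V) := hw.elim And.left And.left
  obtain ⟨y, hy, hwy⟩ := exists_adj_of_mem_tSet_union_pSet (Set.insert_nonempty _ _) hw
  by_contra hwb
  exact (hG.mem_iSet_of_not_adj_midpoint h hwA hwb).2 y hy hwy

lemma P4Sparse.adj_midpoints_of_mem_tSet_union_pSet (hG : P4Sparse G) (h : IsP4 G a b c d)
    (hw : w ∈ tSet G {a, b, c, d} ∪ pSet G {a, b, c, d}) : G.Adj w b ∧ G.Adj w c := by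
  have hrev : ({a, b, c, d} : Set V) = {d, c, b, a} := by grind
  exact ⟨hG.adj_midpoint_of_mem_tSet_union_pSet h hw,
    hG.adj_midpoint_of_mem_tSet_union_pSet h.reverse (hrev ▸ hw)⟩

end

/-- **Observation 2.3, complement form.** If `G` is `P4`-sparse and `A`
induces a `P4`, then there are no distinct `u, v ∈ T(A) ∪ P(A)` and `x ∈ I(A)` such that the
only edge of `G` among `{u, v, x}` is `vx`. -/
theorem p4Sparse_obs_2_3_compl (G : SimpleGraph V) (hG : P4Sparse G)
    (a b c d : V) (hP4 : IsP4 G a b c d) (A : Set V) (hA : A = {a, b, c, d}) :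
    ¬∃ u v x : V, u ≠ v ∧ u ∈ tSet G A ∪ pSet G A ∧ v ∈ tSet G A ∪ pSet G A ∧
      x ∈ iSet G A ∧ ¬G.Adj u v ∧ ¬G.Adj u x ∧ G.Adj v x := by
  subst hA
  rintro ⟨u, v, x, -, hu, hv, ⟨-, hx⟩, huv, hux, hvx⟩
  obtain ⟨hub, huc⟩ := hG.adj_midpoints_of_mem_tSet_union_pSet hP4 hu
  obtain ⟨hvb, hvc⟩ := hG.adj_midpoints_of_mem_tSet_union_pSet hP4 hv
  have isP4_through {y : V} (huy : G.Adj u y) (hvy : G.Adj v y) (hxy : ¬G.Adj x y) :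
      IsP4 G x v y u :=
    .of_adj hvx.symm hvy huy.symm hxy (mt .symm hux) (mt .symm huv)
  have hxvbu : IsP4 G x v b u := isP4_through hub hvb (hx b (by simp))
  have hxvcu : IsP4 G x v c u := isP4_through huc hvc (hx c (by simp))
  have hbc : b ≠ c := hP4.2.2.2.1
  exact hbc (hG.eq_of_isP4_of_isP4 hxvbu hxvcu)
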